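/- For every positive integer n, the n-ladder graph P_n × P_2 is isomorphic to a subgraph of the coprime graph H_{2n}. -/

import Mathlib

open SimpleGraph

/-! A ladder is handled as a list of columns, each a pair of integers, from the column `{E, E - 1}`
downwards. Relative to a reference integer `N`, a *window* is a short ladder on consecutive
numbers `N - x` whose last column can be followed by `{N - b - 1, N - b - 2}`; putting it on top of
a ladder for `N - b - 1` gives a longer one, so it suffices to find one window for each `E = 2n`
and induct.

If `3 ∤ E`, the single column `(E, E - 1)` is a window. Otherwise `E = 6m`. For most residues of
`m` modulo 35 some fixed window works, because all differences of neighbours have only the prime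
factors 2, 3, 5, 7. In the four remaining classes `105 ∣ N` for one of `N = E, E - 6, E - 3, E - 9`.
Let `q` be the least odd prime not dividing `N`. An odd prime `p < q` dividing `N - x` also divides
`x`, so `N - x` and `N - y` are coprime as soon as `x - y` is odd, `|x - y| < q`, and some integer
combination of `x` and `y` divides `2 ^ k * q`. Hence the columns `(x, q - x)` with `0 < x < q`
always form a ladder, and a bounded number of extra columns completes most of them to a window.
-/

section Ladder

variable {α β : Type*} {R : α → α → Prop}

/-- A list of columns `(a, b)` that is a ladder in the graph of `R`: each column is an `R`-edge (a
rung), and so are both links between consecutive columns (the rails). -/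
structure IsLadder (R : α → α → Prop) (l : List (α × α)) : Prop where
  rungs : ∀ c ∈ l, R c.1 c.2
  rails : l.IsChain fun c d => R c.1 d.1 ∧ R c.2 d.2

namespace IsLadder

instance [DecidableRel R] (l : List (α × α)) : Decidable (IsLadder R l) :=
  decidable_of_iff (_ ∧ _) ⟨fun h => ⟨h.1, h.2⟩, fun h => ⟨h.rungs, h.rails⟩⟩

theorem map {S : β → β → Prop} {f : α → β} {l : List (α × α)}
    (hf : ∀ x y, R x y → S (f x) (f y)) (h : IsLadder R l) :
    IsLadder S (l.map (Prod.map f f)) where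
  rungs := by
    simp only [List.mem_map, forall_exists_index, and_imp, forall_apply_eq_imp_iff₂]
    exact fun c hc => hf _ _ (h.rungs c hc)
  rails := (List.isChain_map _).2 (h.rails.imp fun _ _ hcd => hcd.imp (hf _ _) (hf _ _))

theorem swap [Std.Symm R] {l : List (α × α)} (h : IsLadder R l) :
    IsLadder R (l.map Prod.swap) where
  rungs := by
    simp only [List.mem_map, forall_exists_index, and_imp, forall_apply_eq_imp_iff₂]
    exact fun c hc => Std.Symm.symm _ _ (h.rungs c hc)
  rails := (List.isChain_map _).2 (h.rails.imp fun _ _ => And.symm)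

theorem append_of_head? {l₁ l₂ : List (α × α)} {a : α × α} (h₁ : IsLadder R (l₁ ++ [a]))
    (h₂ : IsLadder R l₂) (ha : ∀ b ∈ l₂.head?, b = a) : IsLadder R (l₁ ++ l₂) where
  rungs c hc := (List.mem_append.1 hc).elim
    (fun hc => h₁.rungs c (List.mem_append_left _ hc)) (h₂.rungs c)
  rails := by
    obtain ⟨hl₁, -, hjoin⟩ := List.isChain_append.1 h₁.rails
    exact List.isChain_append.2 ⟨hl₁, h₂.rails, fun c hc b hb => ha b hb ▸ hjoin c hc a rfl⟩

theorem append_of_getLast? {l₁ l₂ : List (α × α)} {a : α × α} (h₁ : IsLadder R l₁)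
    (h₂ : IsLadder R (a :: l₂)) (ha : ∀ b ∈ l₁.getLast?, b = a) : IsLadder R (l₁ ++ l₂) where
  rungs c hc := (List.mem_append.1 hc).elim (h₁.rungs c)
    fun hc => h₂.rungs c (List.mem_cons_of_mem _ hc)
  rails := by
    obtain ⟨hjoin, hl₂⟩ := List.isChain_cons.1 h₂.rails
    exact List.isChain_append.2 ⟨h₁.rails, hl₂, fun b hb d hd => ha b hb ▸ hjoin d hd⟩

end IsLadder

/-- The labelling of the vertices of a ladder graph read off from a list of columns: the second
factor selects the component of a column. -/
def ladderEntry (l : List (α × α)) (u : Fin l.length × Fin 2) : α :=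
  if u.2 = 0 then l[u.1].1 else l[u.1].2

theorem IsLadder.rel_ladderEntry_of_adj [Std.Symm R] {l : List (α × α)} (h : IsLadder R l)
    {u v : Fin l.length × Fin 2} (huv : (pathGraph l.length □ pathGraph 2).Adj u v) :
    R (ladderEntry l u) (ladderEntry l v) := by
  have rail : ∀ (i j : Fin l.length) (t : Fin 2), i.1 + 1 = j.1 →
      R (ladderEntry l (i, t)) (ladderEntry l (j, t)) := by
    rintro ⟨i, hi⟩ ⟨_, hj⟩ t rfl
    have hij := List.isChain_iff_getElem.1 h.rails i hj
    unfold ladderEntry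
    split_ifs
    exacts [hij.1, hij.2]
  obtain ⟨i, s⟩ := u
  obtain ⟨j, t⟩ := v
  simp only [boxProd_adj, pathGraph_adj] at huv
  rcases huv with ⟨hij | hji, rfl⟩ | ⟨hst, rfl⟩
  · exact rail i j s hij
  · exact Std.Symm.symm _ _ (rail j i s hji)
  · have hrung := h.rungs _ (List.getElem_mem i.2)
    obtain ⟨rfl, rfl⟩ | ⟨rfl, rfl⟩ : (s = 0 ∧ t = 1) ∨ (s = 1 ∧ t = 0) := by omega
    exacts [hrung, Std.Symm.symm _ _ hrung]

end Ladder

/-- `l` is a ladder in the coprime graph on `{1, ..., E}` using every label; by `length_eq`, each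
label then occurs only once. The first column is `{E, E - 1}`, in either order, so that further
columns can be attached above it. -/
structure CoprimeLadder (E : ℤ) (l : List (ℤ × ℤ)) : Prop where
  isLadder : IsLadder IsCoprime l
  length_eq : 2 * (l.length : ℤ) = E
  covers : ∀ x, 1 ≤ x → x ≤ E → ∃ c ∈ l, x = c.1 ∨ x = c.2
  top : ∀ c ∈ l.head?, s(c.1, c.2) = s(E, E - 1)

namespace CoprimeLadder

variable {E : ℤ} {l : List (ℤ × ℤ)}

theorem swap (h : CoprimeLadder E l) : CoprimeLadder E (l.map Prod.swap) where
  isLadder := h.isLadder.swap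
  length_eq := by simpa using h.length_eq
  covers x hx hxE := by
    obtain ⟨c, hc, hxc⟩ := h.covers x hx hxE
    exact ⟨c.swap, List.mem_map_of_mem hc, hxc.symm⟩
  top c hc := by
    obtain ⟨d, hd, rfl⟩ : ∃ d ∈ l.head?, d.swap = c := by simpa using hc
    rw [← h.top d hd, Sym2.eq_swap]
    rfl

theorem image_ladderEntry (h : CoprimeLadder E l) :
    Finset.univ.image (ladderEntry l) = Finset.Icc 1 E := by
  symm
  apply Finset.eq_of_subset_of_card_le
  · intro x hx
    obtain ⟨hx, hxE⟩ := Finset.mem_Icc.1 hx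
    obtain ⟨c, hc, hxc⟩ := h.covers x hx hxE
    obtain ⟨i, hi, rfl⟩ := List.getElem_of_mem hc
    rw [Finset.mem_image]
    rcases hxc with rfl | rfl
    · exact ⟨(⟨i, hi⟩, 0), Finset.mem_univ _, rfl⟩
    · exact ⟨(⟨i, hi⟩, 1), Finset.mem_univ _, rfl⟩
  · have hlen := h.length_eq
    refine Finset.card_image_le.trans ?_
    simp only [Finset.card_univ, Fintype.card_prod, Fintype.card_fin, Int.card_Icc]
    omega

theorem ladderEntry_injective (h : CoprimeLadder E l) : Function.Injective (ladderEntry l) := by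
  have hlen := h.length_eq
  rw [← Set.injOn_univ, ← Finset.coe_univ, ← Finset.card_image_iff, h.image_ladderEntry]
  simp only [Int.card_Icc, Finset.card_univ, Fintype.card_prod, Fintype.card_fin]
  omega

theorem ladderEntry_mem_Icc (h : CoprimeLadder E l) (u) : ladderEntry l u ∈ Set.Icc 1 E := by
  rw [← Finset.coe_Icc, ← h.image_ladderEntry]
  exact Finset.mem_coe.2 (Finset.mem_image_of_mem _ (Finset.mem_univ u))

end CoprimeLadder

/-- The coprime graph on `{1, ..., E}` has a spanning ladder with end rung `{E, E - 1}`. -/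
def HasCoprimeLadder (E : ℤ) : Prop :=
  ∃ l, CoprimeLadder E l

theorem HasCoprimeLadder.exists_head?_eq {E : ℤ} (h : HasCoprimeLadder E) {j : ℤ × ℤ}
    (hj : s(j.1, j.2) = s(E, E - 1)) : ∃ l, CoprimeLadder E l ∧ ∀ c ∈ l.head?, c = j := by
  obtain ⟨l, hl⟩ := h
  rcases l with _ | ⟨c, l⟩
  · exact ⟨[], hl, by simp⟩
  · have hc : s(c.1, c.2) = s(j.1, j.2) := (hl.top c rfl).trans hj.symm
    rcases Sym2.eq_iff.1 hc with ⟨h₁, h₂⟩ | ⟨h₁, h₂⟩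
    · exact ⟨_, hl, by simpa using Prod.ext h₁ h₂⟩
    · exact ⟨_, hl.swap, by simpa using Prod.ext h₂ h₁⟩

/-- Coprimality of the numbers at offsets `x` and `y` below `N`. -/
abbrev CoprimeOffsets (N x y : ℤ) : Prop :=
  IsCoprime (N - x) (N - y)

/-- `w` is an `R`-ladder that uses the offsets `-c, ..., b` once each, begins with the column
`{-c, -c + 1}` and can be continued by the column `j = {b + 1, b + 2}`. An offset `x` stands for the
number `N - x`, so negative offsets lie above the reference point `N`. -/
structure IsWindow (R : ℤ → ℤ → Prop) (c b : ℤ) (w : List (ℤ × ℤ)) (j : ℤ × ℤ) : Prop where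
  isLadder : IsLadder R (w ++ [j])
  length_eq : 2 * (w.length : ℤ) = c + b + 1
  covers : ∀ x, -c ≤ x → x ≤ b → ∃ d ∈ w, x = d.1 ∨ x = d.2
  top : ∃ d ∈ w.head?, s(d.1, d.2) = s(-c, -c + 1)
  join : s(j.1, j.2) = s(b + 1, b + 2)

namespace IsWindow

variable {R S : ℤ → ℤ → Prop} {N c b : ℤ} {w : List (ℤ × ℤ)} {j : ℤ × ℤ}

instance [DecidableRel R] : Decidable (IsWindow R c b w j) :=
  decidable_of_iff (_ ∧ _ ∧ _ ∧ _ ∧ _)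
    ⟨fun ⟨h₁, h₂, h₃, h₄, h₅⟩ => ⟨h₁, h₂, h₃, h₄, h₅⟩,
      fun h => ⟨h.isLadder, h.length_eq, h.covers, h.top, h.join⟩⟩

theorem mono (hRS : ∀ x y, R x y → S x y) (h : IsWindow R c b w j) : IsWindow S c b w j :=
  { h with isLadder := by simpa using h.isLadder.map (f := id) hRS }

theorem hasCoprimeLadder (h : IsWindow (CoprimeOffsets N) c b w j)
    (hrest : HasCoprimeLadder (N - (b + 1))) : HasCoprimeLadder (N + c) := by
  have reflect {d : ℤ × ℤ} {x y x' y' : ℤ} (h : s(d.1, d.2) = s(x, y)) (hx : N - x = x')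
      (hy : N - y = y') : s(N - d.1, N - d.2) = s(x', y') :=
    hx ▸ hy ▸ congrArg (Sym2.map (N - ·)) h
  obtain ⟨l, hl, hhead⟩ := hrest.exists_head?_eq (j := (N - j.1, N - j.2))
    (reflect h.join rfl (by ring))
  refine ⟨w.map (Prod.map (N - ·) (N - ·)) ++ l, ?_, ?_, fun x hx hxE => ?_, ?_⟩
  · have hmap := h.isLadder.map (S := IsCoprime) (f := (N - ·)) fun _ _ h => h
    rw [List.map_append] at hmap
    exact hmap.append_of_head? hl.isLadder hhead
  · have := h.length_eq
    have := hl.length_eq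
    simp only [List.length_append, List.length_map]
    omega
  · rcases le_or_gt x (N - (b + 1)) with hle | hlt
    · obtain ⟨d, hd, hxd⟩ := hl.covers x hx hle
      exact ⟨d, List.mem_append_right _ hd, hxd⟩
    · obtain ⟨d, hd, hxd⟩ := h.covers (N - x) (by omega) (by omega)
      refine ⟨_, List.mem_append_left _ (List.mem_map_of_mem hd), ?_⟩
      simp only [Prod.map_fst, Prod.map_snd]
      omega
  · obtain ⟨d, hd, htop⟩ := h.top
    obtain ⟨w, rfl⟩ := List.head?_eq_some_iff.1 hd
    simp only [List.map_cons, List.cons_append, List.head?_cons, Option.mem_some_iff]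
    rintro _ rfl
    exact reflect htop (by ring) (by ring)

end IsWindow

theorem isCoprime_of_forall_prime {a b : ℤ}
    (h : ∀ p : ℕ, p.Prime → (p : ℤ) ∣ a → ¬ (p : ℤ) ∣ b) : IsCoprime a b :=
  Int.isCoprime_iff_gcd_eq_one.2 <| Nat.coprime_of_dvd fun p hp ha hb =>
    h p hp (Int.natCast_dvd.2 ha) (Int.natCast_dvd.2 hb)

theorem isCoprime_sub_sub_of_modEq {N a d x y : ℤ} (k : ℕ) (hN : N ≡ a [ZMOD d])
    (hxy : x - y ∣ d ^ k) (h : IsCoprime (a - x) (a - y)) : IsCoprime (N - x) (N - y) := by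
  refine isCoprime_of_forall_prime fun p hp hpx hpy => ?_
  have hp' := Nat.prime_iff_prime_int.1 hp
  have hpd : (p : ℤ) ∣ d := hp'.dvd_of_dvd_pow <| dvd_trans (by simpa using dvd_sub hpy hpx) hxy
  have hpN : (p : ℤ) ∣ a - N := hpd.trans hN.dvd
  have key {z : ℤ} (hz : (p : ℤ) ∣ N - z) : (p : ℤ) ∣ a - z := by
    simpa using dvd_add hpN hz
  exact hp'.not_isUnit (h.isUnit_of_dvd' (key hpx) (key hpy))

theorem HasCoprimeLadder.of_not_three_dvd {E : ℤ} (h3 : ¬ 3 ∣ E) (h : HasCoprimeLadder (E - 2)) :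
    HasCoprimeLadder E := by
  have hE : CoprimeOffsets E 0 3 := by
    have := ((Int.prime_three.coprime_iff_not_dvd).2 h3).symm
    simpa [CoprimeOffsets, sub_eq_neg_add] using this.neg_right.add_mul_left_right 1
  have hwindow : IsWindow (CoprimeOffsets E) 0 1 [(0, 1)] (3, 2) := by
    refine ⟨⟨?_, ?_⟩, by simp, by decide, by simp, by decide⟩
    · simp only [List.cons_append, List.nil_append, List.forall_mem_cons, List.not_mem_nil,
        false_imp_iff, implies_true, and_true]
      exact ⟨⟨1, -1, by ring⟩, ⟨-1, 1, by ring⟩⟩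
    · simpa using ⟨hE, ⟨1, -1, by ring⟩⟩
  simpa using hwindow.hasCoprimeLadder (by simpa using h)

/-- Windows with their continuation columns, found by computer search: neighbouring offsets differ
by a number with no prime factor above 7. -/
def residueWindows : List (List (ℤ × ℤ) × (ℤ × ℤ)) :=
  [([(0, 1), (7, 6), (4, 5), (3, 2)], (8, 9)),
   ([(0, 1), (5, 4), (6, 13), (7, 12), (2, 11), (3, 8), (10, 9)], (15, 14)),
   ([(0, 1), (7, 10), (6, 13), (5, 12), (2, 11), (3, 4), (8, 9)], (15, 14)),
   ([(0, 1), (5, 2), (4, 3), (9, 10), (8, 7), (11, 6)], (12, 13)),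
   ([(0, 1), (5, 6), (8, 7), (9, 10), (2, 3), (11, 4)], (12, 13))]

theorem exists_residueWindow : ∀ r ∈ Finset.range 35, r ∉ [0, 1, 18, 19] → ∃ W ∈ residueWindows,
    IsWindow (fun x y => x - y ∣ 210 ^ 3 ∧ IsCoprime (6 * r - x : ℤ) (6 * r - y))
      0 (2 * W.1.length - 1) W.1 W.2 ∧ W.1.length ≤ 3 * r := by
  decide +kernel

theorem HasCoprimeLadder.of_mod_thirtyFive {m : ℕ} (hm : m % 35 ∉ [0, 1, 18, 19])
    (hrest : ∀ E : ℤ, 0 ≤ E → E < 6 * m → Even E → HasCoprimeLadder E) :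
    HasCoprimeLadder (6 * m) := by
  obtain ⟨⟨w, j⟩, -, hw, hle⟩ := exists_residueWindow (m % 35)
    (Finset.mem_range.2 (Nat.mod_lt _ (by norm_num))) hm
  have hmod : (6 * m : ℤ) ≡ 6 * (m % 35 : ℕ) [ZMOD 210] := by
    rw [Int.modEq_iff_dvd]
    omega
  have hwindow := hw.mono fun x y h => isCoprime_sub_sub_of_modEq 3 hmod h.1 h.2
  have hpos : 0 < w.length := by
    obtain ⟨d, hd, -⟩ := hw.top
    exact List.length_pos_iff_ne_nil.2 (by rintro rfl; simp at hd)
  simpa using hwindow.hasCoprimeLadder <| hrest _ (by grind) (by grind)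
    ⟨3 * m - w.length, by ring⟩

/-- The odd primes not dividing `N`; the least of them is the width of the folded windows. -/
def missingOddPrimes (N : ℤ) : Set ℕ :=
  {p | p.Prime ∧ Odd p ∧ ¬ (p : ℤ) ∣ N}

theorem exists_isLeast_missingOddPrimes {N d : ℤ} (hd : 1 < d) (hodd : Odd d)
    (hN : IsCoprime N d) : ∃ q, IsLeast (missingOddPrimes N) q ∧ (q : ℤ) ≤ d := by
  obtain ⟨p, hp, hpd⟩ := Nat.exists_prime_and_dvd (n := d.natAbs) (by omega)
  have hpd : (p : ℤ) ∣ d := Int.natCast_dvd.2 hpd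
  have hmem : p ∈ missingOddPrimes N :=
    ⟨hp, (hodd.natAbs).of_dvd_nat (Int.natCast_dvd.1 hpd), fun hpN =>
      (Nat.prime_iff_prime_int.1 hp).not_isUnit (hN.isUnit_of_dvd' hpN hpd)⟩
  refine ⟨sInf (missingOddPrimes N), ⟨Nat.sInf_mem ⟨p, hmem⟩, fun _ => Nat.sInf_le⟩, ?_⟩
  exact (Nat.cast_le.2 (Nat.sInf_le hmem)).trans (Int.le_of_dvd (by omega) hpd)

theorem isCoprime_sub_sub_of_abs_lt {N : ℤ} {q : ℕ} (hq : IsLeast (missingOddPrimes N) q)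
    {x y α β : ℤ} {k : ℕ} (hodd : Odd (x - y)) (hlt : |x - y| < q)
    (hdvd : α * x + β * y ∣ 2 ^ k * q) : IsCoprime (N - x) (N - y) := by
  refine isCoprime_of_forall_prime fun p hp hpx hpy => ?_
  have hp' := Nat.prime_iff_prime_int.1 hp
  have hpxy : (p : ℤ) ∣ x - y := by simpa using dvd_sub hpy hpx
  have hpodd : Odd p := (hodd.natAbs).of_dvd_nat (Int.natCast_dvd.1 hpxy)
  have hpq : p < q := by
    have hne : x - y ≠ 0 := by rintro h; simp [h] at hodd
    exact_mod_cast (Int.le_of_dvd (abs_pos.2 hne) ((dvd_abs _ _).2 hpxy)).trans_lt hlt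
  have hpN : (p : ℤ) ∣ N := by
    by_contra hpN
    exact hpq.not_ge (hq.2 ⟨hp, hpodd, hpN⟩)
  have key {z : ℤ} (hz : (p : ℤ) ∣ N - z) : (p : ℤ) ∣ z := by simpa using dvd_sub hpN hz
  have hp2q : (p : ℤ) ∣ 2 ^ k * q :=
    (dvd_add ((key hpx).mul_left α) ((key hpy).mul_left β)).trans hdvd
  rcases hp'.dvd_or_dvd hp2q with h | h
  · have : p ∣ 2 := by exact_mod_cast hp'.dvd_of_dvd_pow h
    rw [(Nat.prime_dvd_prime_iff_eq hp Nat.prime_two).1 this] at hpodd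
    exact absurd hpodd (by decide)
  · exact hpq.ne ((Nat.prime_dvd_prime_iff_eq hp hq.1.1).1 (Int.natCast_dvd_natCast.1 h))

theorem isCoprime_sub_of_mem_missingOddPrimes {N : ℤ} {q : ℕ} (hq : q ∈ missingOddPrimes N) :
    IsCoprime N (N - q) := by
  have := ((Nat.prime_iff_prime_int.1 hq.1).coprime_iff_not_dvd.2 hq.2.2).symm
  simpa [sub_eq_neg_add] using this.neg_right.add_mul_left_right 1

/-- The affine form `slope * i + const` in an integer parameter `i`, kept symbolic so that
identities and inequalities between forms can be decided for all `i` at once. -/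
structure AffineForm where
  slope : ℤ
  const : ℤ
deriving DecidableEq

namespace AffineForm

instance (n : ℕ) : OfNat AffineForm n := ⟨⟨0, n⟩⟩
instance : Neg AffineForm := ⟨fun f => ⟨-f.slope, -f.const⟩⟩
instance : Add AffineForm := ⟨fun f g => ⟨f.slope + g.slope, f.const + g.const⟩⟩
instance : Sub AffineForm := ⟨fun f g => ⟨f.slope - g.slope, f.const - g.const⟩⟩
instance : SMul ℤ AffineForm := ⟨fun k f => ⟨k * f.slope, k * f.const⟩⟩

/-- The value of an affine form at the parameter `i`. -/
def eval (i : ℤ) (f : AffineForm) : ℤ :=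
  f.slope * i + f.const

/-- A criterion for an affine form to be positive at every parameter `i ≥ i₀`. -/
def PosFrom (i₀ : ℤ) (f : AffineForm) : Prop :=
  0 ≤ f.slope ∧ 0 < f.eval i₀

/-- A criterion for an affine form to be odd at every parameter. -/
def IsOdd (f : AffineForm) : Prop :=
  Even f.slope ∧ Odd f.const

instance (i₀ : ℤ) (f : AffineForm) : Decidable (f.PosFrom i₀) := inferInstanceAs (Decidable (_ ∧ _))
instance (f : AffineForm) : Decidable f.IsOdd := inferInstanceAs (Decidable (_ ∧ _))

variable {i i₀ : ℤ} (f g : AffineForm)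

@[simp] theorem eval_mk_zero (k : ℤ) : eval i ⟨0, k⟩ = k := by simp [eval]

@[simp] theorem eval_zero : eval i 0 = 0 := eval_mk_zero 0

@[simp] theorem eval_one : eval i 1 = 1 := eval_mk_zero 1

@[simp] theorem eval_two : eval i 2 = 2 := eval_mk_zero 2

@[simp] theorem eval_add : eval i (f + g) = eval i f + eval i g := by
  change (f.slope + g.slope) * i + (f.const + g.const) = _
  simp only [eval]
  ring

@[simp] theorem eval_sub : eval i (f - g) = eval i f - eval i g := by
  change (f.slope - g.slope) * i + (f.const - g.const) = _
  simp only [eval]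
  ring

@[simp] theorem eval_smul (k : ℤ) : eval i (k • f) = k * eval i f := by
  change k * f.slope * i + k * f.const = _
  simp only [eval]
  ring

variable {f}

theorem PosFrom.eval_pos (h : f.PosFrom i₀) (hi : i₀ ≤ i) : 0 < f.eval i :=
  h.2.trans_le (by unfold eval; gcongr; exact h.1)

theorem IsOdd.odd_eval (h : f.IsOdd) (i : ℤ) : Odd (f.eval i) :=
  (h.1.mul_right i).add_odd h.2

/-- Some chain of at most `n` segments `[t.1, t.2]` from `s`, each starting right after the previous
one, begins at `a` and ends at `b`. -/
def Sweeps (s : List (AffineForm × AffineForm)) (b : AffineForm) : ℕ → AffineForm → Prop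
  | 0, a => a = b + 1
  | n + 1, a => a = b + 1 ∨ ∃ t ∈ s, t.1 = a ∧ Sweeps s b n (t.2 + 1)

instance Sweeps.decidable (s : List (AffineForm × AffineForm)) (b : AffineForm) :
    ∀ n a, Decidable (Sweeps s b n a)
  | 0, _ => inferInstanceAs (Decidable (_ = _))
  | n + 1, _ =>
    have := Sweeps.decidable s b n
    inferInstanceAs (Decidable (_ ∨ _))

theorem Sweeps.exists_mem {s : List (AffineForm × AffineForm)} {a b : AffineForm} {n : ℕ} {x : ℤ}
    (h : Sweeps s b n a) (hax : a.eval i ≤ x) (hxb : x ≤ b.eval i) :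
    ∃ t ∈ s, t.1.eval i ≤ x ∧ x ≤ t.2.eval i := by
  have hne : a ≠ b + 1 := by
    rintro rfl
    rw [eval_add, eval_one] at hax
    omega
  induction n generalizing a with
  | zero => exact absurd h hne
  | succ n ih =>
    obtain ⟨t, ht, rfl, hnext⟩ := h.resolve_left hne
    rcases le_or_gt x (t.2.eval i) with hxt | hxt
    · exact ⟨t, ht, hax, hxt⟩
    · have hlt : (t.2 + 1).eval i ≤ x := by simpa using hxt
      refine ih hnext hlt fun heq => ?_
      rw [heq, eval_add, eval_one] at hlt
      omega

end AffineForm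

/-- A decidable criterion for the offsets `x` and `y` to give coprime numbers for every `i ≥ i₀`,
where `q` is the least odd prime not dividing the reference point: they are `0` and `q`, or they
satisfy the hypotheses of `isCoprime_sub_sub_of_abs_lt` with small coefficients. -/
def CertifiedCoprime (q : AffineForm) (i₀ : ℤ) (x y : AffineForm) : Prop :=
  (x = 0 ∧ y = q) ∨ (x = q ∧ y = 0) ∨
    (x - y).IsOdd ∧ (q - (x - y)).PosFrom i₀ ∧ (q + (x - y)).PosFrom i₀ ∧
      ∃ α ∈ ([-3, -2, -1, 0, 1, 2, 3] : List ℤ), ∃ β ∈ ([-3, -2, -1, 0, 1, 2, 3] : List ℤ),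
      ∃ k ∈ List.range 4,
        α • x + β • y = ⟨0, 2 ^ k⟩ ∨ α • x + β • y = (2 ^ k : ℤ) • q

instance (q : AffineForm) (i₀ : ℤ) : DecidableRel (CertifiedCoprime q i₀) :=
  fun _ _ => inferInstanceAs (Decidable (_ ∨ _))

theorem CertifiedCoprime.isCoprime {N : ℤ} {q : ℕ} {i i₀ : ℤ} {f x y : AffineForm}
    (hq : IsLeast (missingOddPrimes N) q) (hi : i₀ ≤ i) (hf : f.eval i = q)
    (h : CertifiedCoprime f i₀ x y) : IsCoprime (N - x.eval i) (N - y.eval i) := by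
  rcases h with ⟨rfl, rfl⟩ | ⟨rfl, rfl⟩ | ⟨hodd, hlt, hgt, α, -, β, -, k, -, hαβ⟩
  · simpa [hf] using isCoprime_sub_of_mem_missingOddPrimes hq.1
  · simpa [hf] using (isCoprime_sub_of_mem_missingOddPrimes hq.1).symm
  · have hlt := hlt.eval_pos hi
    have hgt := hgt.eval_pos hi
    simp only [AffineForm.eval_sub, AffineForm.eval_add, hf] at hlt hgt
    refine isCoprime_sub_sub_of_abs_lt hq (α := α) (β := β) (k := k)
      (by simpa using hodd.odd_eval i) (abs_lt.2 (by omega)) ?_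
    have hαβ := hαβ.imp (congrArg (AffineForm.eval i)) (congrArg (AffineForm.eval i))
    simp only [AffineForm.eval_add, AffineForm.eval_smul, AffineForm.eval_mk_zero, hf] at hαβ
    rcases hαβ with h | h <;> rw [h]
    exact dvd_mul_right _ _

/-- The `n + 1` columns `(x, q - x)` for `x = a, ..., a + n`. -/
def foldColumns (q a : ℤ) (n : ℕ) : List (ℤ × ℤ) :=
  (List.range (n + 1)).map fun i : ℕ => (a + i, q - (a + i))

theorem isLadder_foldColumns {N : ℤ} {q : ℕ} (hq : IsLeast (missingOddPrimes N) q) {a : ℤ} {n : ℕ}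
    (ha : 0 < a) (hn : a + n < q) : IsLadder (CoprimeOffsets N) (foldColumns q a n) where
  rungs c hc := by
    obtain ⟨i, hi, rfl⟩ := List.mem_map.1 hc
    rw [List.mem_range] at hi
    refine isCoprime_sub_sub_of_abs_lt hq (α := 1) (β := 1) (k := 0) ?_ (abs_lt.2 (by grind))
      (by simp)
    rw [show a + i - (q - (a + i)) = 2 * (a + i) - q by ring]
    exact (even_two_mul _).sub_odd ((Int.odd_coe_nat _).2 hq.1.2.1)
  rails := by
    refine (List.isChain_map _).2 ((List.isChain_range_succ _ _).2 fun i _ => ⟨?_, ?_⟩)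
    · exact ⟨1, -1, by push_cast; ring⟩
    · exact ⟨-1, 1, by push_cast; ring⟩

/-- A family of windows indexed by the integers `i ≥ i₀`, for reference points whose least missing
odd prime is `q` evaluated at `i`. The window covers the offsets from `-c` to `bottom` and consists
of the columns `pre`, then `(x, q - x)` for `x` from `foldStart` to `foldEnd`, then `post`; it can
be continued by the column `join`. -/
structure WindowFamily where
  c : ℤ
  q : AffineForm
  i₀ : ℤ
  pre : List (AffineForm × AffineForm)
  foldStart : AffineForm
  foldEnd : AffineForm
  post : List (AffineForm × AffineForm)
  join : AffineForm × AffineForm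

namespace WindowFamily

variable (F : WindowFamily)

/-- The last offset of the windows, one more than `q` when needed to make the number of offsets
even. -/
def bottom : AffineForm :=
  F.q + ⟨0, F.c % 2⟩

/-- The intervals of offsets occupied by the two sides of the fold and by the remaining columns. -/
def segments : List (AffineForm × AffineForm) :=
  (F.foldStart, F.foldEnd) :: (F.q - F.foldEnd, F.q - F.foldStart) ::
    (F.pre ++ F.post).flatMap fun d => [(d.1, d.1), (d.2, d.2)]

/-- The symbolic checks that make every member of the family a window, see `Valid.isWindow`. The
ladders `pre` and `post` are checked together with the folded column they are adjacent to. -/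
structure Valid : Prop where
  isLadder_pre :
    IsLadder (CertifiedCoprime F.q F.i₀) (F.pre ++ [(F.foldStart, F.q - F.foldStart)])
  isLadder_post :
    IsLadder (CertifiedCoprime F.q F.i₀) ((F.foldEnd, F.q - F.foldEnd) :: (F.post ++ [F.join]))
  foldStart_pos : F.foldStart.PosFrom F.i₀
  foldEnd_lt : (F.q - F.foldEnd).PosFrom F.i₀
  foldStart_le : (F.foldEnd + 1 - F.foldStart).PosFrom F.i₀
  length_eq : (2 : ℤ) • (⟨0, F.pre.length + F.post.length⟩ + (F.foldEnd + 1 - F.foldStart)) =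
    ⟨0, F.c⟩ + F.bottom + 1
  sweeps : AffineForm.Sweeps F.segments F.bottom F.segments.length ⟨0, -F.c⟩
  top : ∃ d ∈ F.pre.head?, s(d.1, d.2) = s(⟨0, -F.c⟩, ⟨0, -F.c⟩ + 1)
  join : s(F.join.1, F.join.2) = s(F.bottom + 1, F.bottom + 2)

instance : Decidable F.Valid :=
  decidable_of_iff (_ ∧ _ ∧ _ ∧ _ ∧ _ ∧ _ ∧ _ ∧ _ ∧ _)
    ⟨fun ⟨h₁, h₂, h₃, h₄, h₅, h₆, h₇, h₈, h₉⟩ => ⟨h₁, h₂, h₃, h₄, h₅, h₆, h₇, h₈, h₉⟩,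
      fun h => ⟨h.isLadder_pre, h.isLadder_post, h.foldStart_pos, h.foldEnd_lt, h.foldStart_le,
        h.length_eq, h.sweeps, h.top, h.join⟩⟩

end WindowFamily

/-- Window families for each needed `c` and each class of `q` modulo 4, and one for `c = 9`,
`q = 11`, where the generic family needs `q ≥ 19`. Here `q₁ = 4 * i + 1`, `q₃ = 4 * i + 3`, and
`m₁`, `m₃` are the corresponding values of `(q - 1) / 2`. The columns were found by computer
search. -/
def windowFamilies : List WindowFamily :=
  let q₁ : AffineForm := ⟨4, 1⟩
  let m₁ : AffineForm := ⟨2, 0⟩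
  let q₃ : AffineForm := ⟨4, 3⟩
  let m₃ : AffineForm := ⟨2, 1⟩
  [{ c := 0, q := q₁, i₀ := 3
     pre := [(1, 0), (q₁ - 1, q₁), (m₁ + 1, m₁)]
     foldStart := 2, foldEnd := m₁ - 1
     post := []
     join := (q₁ + 1, q₁ + 2) },
   { c := 0, q := q₃, i₀ := 2
     pre := [(0, 1), (q₃, q₃ - 1)]
     foldStart := 2, foldEnd := m₃
     post := []
     join := (q₃ + 1, q₃ + 2) },
   { c := 6, q := q₁, i₀ := 3
     pre := [(-6, -5), (-1, -4), (0, 1), (q₁, q₁ - 1), (m₁, m₁ + 1), (q₁ - 2, q₁ - 3), (2, 3),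
       (-3, -2)]
     foldStart := 4, foldEnd := m₁ - 1
     post := []
     join := (q₁ + 1, q₁ + 2) },
   { c := 6, q := q₃, i₀ := 2
     pre := [(-5, -6), (-4, -1), (1, 0), (q₃ - 1, q₃), (q₃ - 2, q₃ - 3), (2, 3), (-3, -2)]
     foldStart := 4, foldEnd := m₃
     post := []
     join := (q₃ + 1, q₃ + 2) },
   { c := 3, q := q₁, i₀ := 3
     pre := [(-3, -2), (m₁ + 2, -1), (1, 0), (q₁ - 1, q₁), (m₁ + 1, m₁)]
     foldStart := 2, foldEnd := m₁ - 2
     post := [(m₁ - 1, q₁ + 1)]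
     join := (q₁ + 3, q₁ + 2) },
   { c := 3, q := q₃, i₀ := 2
     pre := [(-2, -3), (3, 2)]
     foldStart := 4, foldEnd := m₃ - 1
     post := [(q₃ - 2, q₃ - 1), (q₃ - 3, 1), (-1, 0), (m₃ + 1, q₃), (m₃, q₃ + 1)]
     join := (q₃ + 3, q₃ + 2) },
   { c := 9, q := q₁, i₀ := 3
     pre := [(-8, -9), (-3, -4), (-2, -7), (-5, -6), (m₁ - 2, -1), (1, 0), (q₁ - 1, q₁),
       (m₁ + 1, m₁)]
     foldStart := 2, foldEnd := m₁ - 3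
     post := [(q₁ + 1, m₁ + 3), (m₁ - 1, m₁ + 2)]
     join := (q₁ + 3, q₁ + 2) },
   { c := 9, q := q₃, i₀ := 4
     pre := [(-9, -8), (-4, -7)]
     foldStart := m₃ + 4, foldEnd := q₃ - 3
     post := [(q₃ - 2, 2), (m₃ - 1, -3), (m₃ - 2, -2), (m₃ + 3, -5), (-1, -6), (0, 1),
       (q₃, q₃ - 1), (q₃ + 1, m₃ + 2), (m₃, m₃ + 1)]
     join := (q₃ + 3, q₃ + 2) },
   { c := 9, q := 11, i₀ := 0
     pre := [(-8, -9), (-7, -4), (-2, -3), (-5, 2), (-6, -1), (1, 0), (6, 11), (5, 12), (4, 7)]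
     foldStart := 3, foldEnd := 3
     post := [(10, 9)]
     join := (13, 14) }]

theorem valid_of_mem_windowFamilies : ∀ F ∈ windowFamilies, F.Valid := by
  decide +kernel

theorem mem_foldColumns {q a x : ℤ} {n : ℕ} (hax : a ≤ x) (hxn : x ≤ a + n) :
    (x, q - x) ∈ foldColumns q a n :=
  List.mem_map.2 ⟨(x - a).toNat, List.mem_range.2 (by omega), by ext <;> simp <;> omega⟩

theorem head?_foldColumns (q a : ℤ) (n : ℕ) : (foldColumns q a n).head? = some (a, q - a) := by
  simp [foldColumns, List.range_succ_eq_map]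

theorem getLast?_foldColumns (q a : ℤ) (n : ℕ) :
    (foldColumns q a n).getLast? = some (a + n, q - (a + n)) := by
  simp [foldColumns, List.range_succ]

namespace WindowFamily

variable {F : WindowFamily} {N i : ℤ} {q : ℕ}

/-- The columns obtained from columns of affine forms at the parameter `i`. -/
def evalColumns (i : ℤ) (w : List (AffineForm × AffineForm)) : List (ℤ × ℤ) :=
  w.map (Prod.map (AffineForm.eval i) (AffineForm.eval i))

/-- The member of the family `F` at the parameter `i`. -/
def window (F : WindowFamily) (i : ℤ) : List (ℤ × ℤ) :=
  evalColumns i F.pre ++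
    (foldColumns (F.q.eval i) (F.foldStart.eval i) ((F.foldEnd - F.foldStart).eval i).toNat ++
      evalColumns i F.post)

theorem Valid.foldStart_add_eq (h : F.Valid) (hi : F.i₀ ≤ i) :
    F.foldStart.eval i + ((F.foldEnd - F.foldStart).eval i).toNat = F.foldEnd.eval i := by
  have := h.foldStart_le.eval_pos hi
  simp only [AffineForm.eval_add, AffineForm.eval_sub, AffineForm.eval_one] at this ⊢
  omega

theorem Valid.isLadder_window (h : F.Valid) (hq : IsLeast (missingOddPrimes N) q) (hi : F.i₀ ≤ i)
    (hFq : F.q.eval i = q) :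
    IsLadder (CoprimeOffsets N) (F.window i ++ evalColumns i [F.join]) := by
  have hend := h.foldStart_add_eq hi
  have hcoprime (x y : AffineForm) : CertifiedCoprime F.q F.i₀ x y →
      IsCoprime (N - x.eval i) (N - y.eval i) :=
    CertifiedCoprime.isCoprime hq hi hFq
  have hfold := isLadder_foldColumns hq (n := ((F.foldEnd - F.foldStart).eval i).toNat)
    (h.foldStart_pos.eval_pos hi) (by
      rw [hend, ← hFq]
      simpa using h.foldEnd_lt.eval_pos hi)
  have hpre := h.isLadder_pre.map (S := CoprimeOffsets N) hcoprime
  have hpost := h.isLadder_post.map (S := CoprimeOffsets N) hcoprime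
  rw [List.map_append] at hpre
  rw [window, hFq, List.append_assoc, List.append_assoc, evalColumns, evalColumns, evalColumns,
    ← List.map_append]
  refine hpre.append_of_head? (hfold.append_of_getLast? hpost ?_) ?_
  · simp only [getLast?_foldColumns, hend, Option.mem_some_iff]
    rintro _ rfl
    simp [hFq]
  · simp [head?_foldColumns, hFq]

theorem Valid.length_window (h : F.Valid) (hi : F.i₀ ≤ i) :
    2 * ((F.window i).length : ℤ) = F.c + F.bottom.eval i + 1 := by
  have hend := h.foldStart_add_eq hi
  have hlen := congrArg (AffineForm.eval i) h.length_eq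
  simp only [AffineForm.eval_smul, AffineForm.eval_add, AffineForm.eval_sub,
    AffineForm.eval_mk_zero, AffineForm.eval_one] at hlen
  simp only [window, evalColumns, foldColumns, List.length_append, List.length_map,
    List.length_range]
  omega

theorem Valid.covers_window (h : F.Valid) (hi : F.i₀ ≤ i) {x : ℤ} (hcx : -F.c ≤ x)
    (hxb : x ≤ F.bottom.eval i) : ∃ d ∈ F.window i, x = d.1 ∨ x = d.2 := by
  have hend := h.foldStart_add_eq hi
  obtain ⟨t, ht, hxt⟩ := h.sweeps.exists_mem (i := i) (by simpa using hcx) hxb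
  have mem_of_mem {d : AffineForm × AffineForm} (hd : d ∈ F.pre ++ F.post) :
      (d.1.eval i, d.2.eval i) ∈ F.window i := by
    simp only [window, evalColumns, List.mem_append] at hd ⊢
    exact hd.imp List.mem_map_of_mem fun hd => Or.inr (List.mem_map_of_mem hd)
  have mem_of_fold {y : ℤ} (hy : F.foldStart.eval i ≤ y) (hy' : y ≤ F.foldEnd.eval i) :
      (y, F.q.eval i - y) ∈ F.window i :=
    List.mem_append_right _ (List.mem_append_left _ (mem_foldColumns hy (hend ▸ hy')))
  simp only [segments, List.mem_cons, List.mem_flatMap, List.not_mem_nil, or_false] at ht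
  rcases ht with rfl | rfl | ⟨d, hd, rfl | rfl⟩
  · exact ⟨_, mem_of_fold hxt.1 hxt.2, Or.inl rfl⟩
  · simp only [AffineForm.eval_sub] at hxt
    exact ⟨_, mem_of_fold (y := F.q.eval i - x) (by omega) (by omega), Or.inr (by simp)⟩
  · exact ⟨_, mem_of_mem hd, Or.inl (le_antisymm hxt.2 hxt.1)⟩
  · exact ⟨_, mem_of_mem hd, Or.inr (le_antisymm hxt.2 hxt.1)⟩

theorem Valid.isWindow (h : F.Valid) (hq : IsLeast (missingOddPrimes N) q) (hi : F.i₀ ≤ i)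
    (hFq : F.q.eval i = q) :
    IsWindow (CoprimeOffsets N) F.c (F.bottom.eval i) (F.window i)
      (F.join.1.eval i, F.join.2.eval i) where
  isLadder := h.isLadder_window hq hi hFq
  length_eq := h.length_window hi
  covers _ := h.covers_window hi
  top := by
    obtain ⟨d, hd, htop⟩ := h.top
    refine ⟨Prod.map (AffineForm.eval i) (AffineForm.eval i) d, ?_, ?_⟩
    · simp [window, evalColumns, Option.mem_def.1 hd]
    · simpa using congrArg (Sym2.map (AffineForm.eval i)) htop
  join := by
    simpa using congrArg (Sym2.map (AffineForm.eval i)) h.join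

end WindowFamily

theorem exists_windowFamily {c : ℤ} (hc : c ∈ [0, 6, 3, 9]) {q : ℕ} (hprime : q.Prime)
    (hq : 11 ≤ q) : ∃ F ∈ windowFamilies, F.c = c ∧ ∃ i, F.i₀ ≤ i ∧ F.q.eval i = q := by
  have small : ∀ c ∈ ([0, 6, 3, 9] : List ℤ), ∀ q ∈ ([11, 13] : List ℤ),
      ∃ F ∈ windowFamilies, F.c = c ∧ ∃ i ∈ ([2, 3] : List ℤ), F.i₀ ≤ i ∧ F.q.eval i = q := by
    decide +kernel
  have large : ∀ c ∈ ([0, 6, 3, 9] : List ℤ), ∀ r ∈ ([1, 3] : List ℤ),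
      ∃ F ∈ windowFamilies, F.c = c ∧ F.i₀ ≤ 4 ∧ F.q = ⟨4, r⟩ := by
    decide +kernel
  rcases lt_or_ge q 17 with hlt | hge
  · have hcases : q = 11 ∨ q = 13 := by
      interval_cases q <;> revert hprime <;> decide
    obtain ⟨F, hF, hFc, i, -, hi⟩ := small c hc q (by rcases hcases with rfl | rfl <;> simp)
    exact ⟨F, hF, hFc, i, hi⟩
  · have hodd := hprime.eq_two_or_odd
    have hmod : (q % 4 : ℤ) = 1 ∨ (q % 4 : ℤ) = 3 := by omega
    obtain ⟨F, hF, hFc, hi₀, hFq⟩ := large c hc (q % 4) (by simpa using hmod)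
    exact ⟨F, hF, hFc, q / 4, by omega, by rw [hFq, AffineForm.eval, Int.mul_ediv_add_emod]⟩

theorem eleven_le_of_mem_missingOddPrimes {N : ℤ} {q : ℕ} (hN : 105 ∣ N)
    (hq : q ∈ missingOddPrimes N) : 11 ≤ q := by
  obtain ⟨hprime, hodd, hqN⟩ := hq
  by_contra! hlt
  interval_cases q <;> first | omega | (revert hprime hodd; decide)

theorem HasCoprimeLadder.add_of_dvd {N c : ℤ} (hc : c ∈ [0, 6, 3, 9]) (hpos : 0 < N)
    (hN : 105 ∣ N) (heven : Even (N + c))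
    (hrest : ∀ E : ℤ, 0 ≤ E → E < N + c → Even E → HasCoprimeLadder E) :
    HasCoprimeLadder (N + c) := by
  have hc0 : 0 ≤ c := by
    simp only [List.mem_cons, List.not_mem_nil, or_false] at hc
    omega
  rw [Int.even_iff] at heven
  have hcoprime : IsCoprime N (N - 1 - c % 2) := by
    rcases Int.emod_two_eq_zero_or_one c with h | h
    · exact ⟨1, -1, by rw [h]; ring⟩
    · obtain ⟨k, hk⟩ : Odd N := Int.odd_iff.2 (by omega)
      exact ⟨1 - k, k, by rw [h, hk]; ring⟩
  obtain ⟨q, hq, hqN⟩ := exists_isLeast_missingOddPrimes (by omega)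
    (Int.odd_iff.2 (by omega)) hcoprime
  obtain ⟨F, hF, rfl, i, hi, hFq⟩ := exists_windowFamily hc hq.1.1
    (eleven_le_of_mem_missingOddPrimes hN hq.1)
  refine ((valid_of_mem_windowFamilies F hF).isWindow hq hi hFq).hasCoprimeLadder
    (hrest _ ?_ ?_ ?_)
  all_goals
    have hqodd := Nat.odd_iff.1 hq.1.2.1
    simp only [WindowFamily.bottom, AffineForm.eval_add, AffineForm.eval_mk_zero, hFq, Int.even_iff]
    omega

theorem hasCoprimeLadder_six : HasCoprimeLadder 6 :=
  ⟨[(6, 5), (1, 2), (4, 3)], by decide, by decide, by decide, by decide⟩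

theorem hasCoprimeLadder_two_mul (n : ℕ) : HasCoprimeLadder (2 * n) := by
  induction n using Nat.strong_induction_on with
  | _ n ih =>
  have hrest : ∀ E : ℤ, 0 ≤ E → E < 2 * n → Even E → HasCoprimeLadder E := by
    rintro _ h₀ hlt ⟨k, rfl⟩
    lift k to ℕ using by omega
    simpa [two_mul] using ih k (by omega)
  rcases eq_or_ne n 0 with rfl | hn
  · exact ⟨[], ⟨by simp, by simp⟩, by simp, fun x _ _ => by grind, by simp⟩
  by_cases h3 : 3 ∣ (2 * n : ℤ)
  swap
  · exact .of_not_three_dvd h3 (hrest _ (by omega) (by omega) (by grind))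
  obtain ⟨m, rfl⟩ : ∃ m, n = 3 * m := ⟨n / 3, by omega⟩
  have hE : (2 * (3 * m : ℕ) : ℤ) = 6 * m := by push_cast; ring
  rw [hE] at hrest ⊢
  by_cases hm : m % 35 ∈ [0, 1, 18, 19]
  swap
  · exact .of_mod_thirtyFive hm hrest
  rcases eq_or_ne m 1 with rfl | hm1
  · exact hasCoprimeLadder_six
  obtain ⟨c, hc, hpos, hdvd⟩ : ∃ c ∈ ([0, 6, 3, 9] : List ℤ),
      0 < 6 * (m : ℤ) - c ∧ 105 ∣ 6 * (m : ℤ) - c := by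
    simp only [List.mem_cons, List.not_mem_nil, or_false] at hm
    rcases hm with h | h | h | h
    exacts [⟨0, by simp, by omega, by omega⟩, ⟨6, by simp, by omega, by omega⟩,
      ⟨3, by simp, by omega, by omega⟩, ⟨9, by simp, by omega, by omega⟩]
  have hadd := sub_add_cancel (6 * (m : ℤ)) c
  rw [← hadd] at hrest ⊢
  exact .add_of_dvd hc hpos hdvd ⟨3 * m, by ring⟩ hrest

/-- For every positive integer `n`, the `n`-ladder graph `P_n × P_2` is isomorphic to a
subgraph of the coprime graph `H_{2n}` (vertex set `{1, ..., 2n}`, two distinct vertices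
adjacent iff they are relatively prime): there is an injective map from the vertices of
the ladder to the vertices of `H_{2n}` carrying edges to edges. -/
theorem ladder_subgraph_of_coprime_graph (n : ℕ) (hn : 0 < n) :
    ∃ f : Fin n × Fin 2 → {x : ℕ // x ∈ Set.Icc 1 (2 * n)},
      Function.Injective f ∧
      ∀ u v : Fin n × Fin 2,
        (pathGraph n □ pathGraph 2).Adj u v →
          (f u : ℕ) ≠ (f v : ℕ) ∧ Nat.gcd (f u : ℕ) (f v : ℕ) = 1 := by
  obtain ⟨l, hl⟩ := hasCoprimeLadder_two_mul n
  obtain rfl : l.length = n := by have := hl.length_eq; omega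
  have hmem (u) : 1 ≤ ladderEntry l u ∧ ladderEntry l u ≤ 2 * l.length := hl.ladderEntry_mem_Icc u
  have hcast (u) : ((ladderEntry l u).toNat : ℤ) = ladderEntry l u := Int.toNat_of_nonneg (by grind)
  have hinj {u v} (h : (ladderEntry l u).toNat = (ladderEntry l v).toNat) : u = v :=
    hl.ladderEntry_injective (by rw [← hcast u, h, hcast v])
  refine ⟨fun u => ⟨(ladderEntry l u).toNat, by grind⟩, fun u v h => hinj (congrArg Subtype.val h),
    fun u v huv => ⟨fun h => huv.ne (hinj h), ?_⟩⟩
  have hcoprime := hl.isLadder.rel_ladderEntry_of_adj huv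
  rwa [← hcast u, ← hcast v, Nat.isCoprime_iff_coprime] at hcoprime
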